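/- Let μ(x) = Π_{i=1}^N sin^a|x_i − x_{i+1}|. Then for every spin state |s⟩ ∈ Σ, the Σ-valued functions Ψ_3 = μ · [ (2a/(2a+1)) Λ|s⟩ + Σ_{i≠j} cos(2(x_i − x_j)) |s_j⟩ ] and Ψ_4 = μ · Σ_{i≠j} sin(2(x_i − x_j)) |s_j⟩ satisfy H_2 Ψ_{3,4} = (2Na² + 8(2a+1)) Ψ_{3,4} at every point of C_2. -/

import Mathlib

noncomputable section

/-- The spin space `Σ`: complex functions on `Fin N → Fin d`. -/
abbrev Spin (N d : ℕ) : Type := (Fin N → Fin d) → ℂ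

/-- Partial derivative `∂_i F` of a function of `N` real variables. -/
noncomputable def pd {N : ℕ} {E : Type} [NormedAddCommGroup E] [NormedSpace ℝ E]
    (i : Fin N) (F : (Fin N → ℝ) → E) : (Fin N → ℝ) → E :=
  fun x => fderiv ℝ F x (Pi.single i 1)

/-- The spin exchange operator `S_{ij}`, transposing the `i`-th and `j`-th spin slots. -/
def Sop {N d : ℕ} (i j : Fin N) (v : Spin N d) : Spin N d :=
  fun c => v (c ∘ Equiv.swap i j)

/-- The action of a permutation `π ∈ S_N` on the spin space, permuting the `N` spin slots. -/
def spinPerm {N d : ℕ} (π : Equiv.Perm (Fin N)) (v : Spin N d) : Spin N d :=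
  fun c => v (c ∘ π)

/-- The spin vector `|s_i⟩ = (1/N!) ∑_{π ∈ S_N, π(1) = i} π |s⟩`. -/
noncomputable def sComp {N d : ℕ} [NeZero N] (s : Spin N d) (i : Fin N) : Spin N d :=
  (N.factorial : ℂ)⁻¹ •
    ∑ π ∈ Finset.univ.filter (fun π : Equiv.Perm (Fin N) => π 0 = i), spinPerm π s

/-- The symmetrization `Λ|s⟩ = ∑ i, |s_i⟩`. -/
noncomputable def Lam {N d : ℕ} [NeZero N] (s : Spin N d) : Spin N d :=
  ∑ i : Fin N, sComp s i

/-- The configuration space `C_2 = {x : x_1 < ⋯ < x_N, x_N - x_1 < π}`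
(here `x (-1)` is the last coordinate `x_N`). -/
def C2 (N : ℕ) [NeZero N] : Set (Fin N → ℝ) :=
  {x | StrictMono x ∧ x (-1) - x 0 < Real.pi}

/-- The Hamiltonian `H_2 = -∑ i ∂_i² + V_2` with
`V_2 = 2a² ∑ i cot(x_i - x_{i-1}) cot(x_i - x_{i+1})
  + 2a ∑ i csc²(x_i - x_{i+1}) (a - S_{i,i+1})` (indices cyclic). -/
noncomputable def H2 {N d : ℕ} [NeZero N] (a : ℝ)
    (Ψ : (Fin N → ℝ) → Spin N d) : (Fin N → ℝ) → Spin N d :=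
  fun x =>
    -(∑ i : Fin N, pd i (pd i Ψ) x)
    + (2 * a ^ 2 * ∑ i : Fin N,
        (Real.cos (x i - x (i - 1)) / Real.sin (x i - x (i - 1))) *
          (Real.cos (x i - x (i + 1)) / Real.sin (x i - x (i + 1)))) • Ψ x
    + (2 * a) • ∑ i : Fin N,
        ((Real.sin (x i - x (i + 1))) ^ 2)⁻¹ • (a • Ψ x - Sop i (i + 1) (Ψ x))

/-- The gauge factor `μ(x) = ∏ i sin^a |x_i - x_{i+1}|` (indices cyclic). -/
noncomputable def mu2 {N : ℕ} [NeZero N] (a : ℝ) (x : Fin N → ℝ) : ℝ :=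
  ∏ i : Fin N, (Real.sin |x i - x (i + 1)|) ^ a

/-!
On the region where `μ` is smooth, `∂_i μ = a L_i μ` with the drift
`L_i = cot (x_i - x_{i-1}) + cot (x_i - x_{i+1})`. The quadratic terms produced by `∂_i² μ` are
exactly the scalar part of the potential: `μ` is a ground state of energy `2Na²` of the
Hamiltonian with every `S_{i,i+1}` replaced by `1`. Conjugation by `μ` therefore leaves
`-∑ ∂_i² - 2a ∑ L_i ∂_i + 2a ∑ csc² (x_i - x_{i+1}) (1 - S_{i,i+1}) + 2Na²`.

Since `S_{i,i+1} |s_j⟩ = |s_{(i i+1) j}⟩`, this operator can be computed on the coefficient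
`G_j = ∑_k f (x_k - x_j)` of `|s_j⟩`, where `f u = A cos 2u + B sin 2u`. The three terms are
`8 G_j - 8A`, `8a G_j + 4a L_j G'_j` and `8a G_j - 4a L_j G'_j`, with `G'_j` built from the
quadrature partner `B cos 2u - A sin 2u`: the drift sum telescopes around the cycle, and the two
first-order remainders cancel. Subtracting from each `G_j` the constant `A / (2a + 1)` absorbs the
inhomogeneity `-8A` and produces the eigenvalue `2Na² + 8(2a + 1)`.
-/

open Real Finset

section PartialDerivative

variable {N : ℕ} {E : Type} [NormedAddCommGroup E] [NormedSpace ℝ E]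
  {F G : (Fin N → ℝ) → E} {f : (Fin N → ℝ) → ℝ} {x : Fin N → ℝ}

lemma pd_congr_of_eventuallyEq (i : Fin N) (h : F =ᶠ[nhds x] G) : pd i F x = pd i G x := by
  rw [pd, pd, h.fderiv_eq]

lemma pd_add (i : Fin N) (hF : DifferentiableAt ℝ F x) (hG : DifferentiableAt ℝ G x) :
    pd i (fun y => F y + G y) x = pd i F x + pd i G x := by
  simp only [pd, fderiv_fun_add hF hG, add_apply]

lemma pd_sum {ι : Type*} {u : Finset ι} {F : ι → (Fin N → ℝ) → E} (i : Fin N)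
    (hF : ∀ k ∈ u, DifferentiableAt ℝ (F k) x) :
    pd i (fun y => ∑ k ∈ u, F k y) x = ∑ k ∈ u, pd i (F k) x := by
  simp only [pd, fderiv_fun_sum hF, _root_.sum_apply]

lemma pd_smul (i : Fin N) (hf : DifferentiableAt ℝ f x) (hF : DifferentiableAt ℝ F x) :
    pd i (fun y => f y • F y) x = f x • pd i F x + pd i f x • F x := by
  simp [pd, fderiv_fun_smul hf hF]

lemma differentiableAt_comp_coord_sub {h : ℝ → ℝ} (k l : Fin N)
    (hh : DifferentiableAt ℝ h (x k - x l)) :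
    DifferentiableAt ℝ (fun y => h (y k - y l)) x :=
  DifferentiableAt.comp x (g := h) (f := fun y : Fin N → ℝ => y k - y l) hh
    (by fun_prop)

lemma pd_comp_coord_sub {h : ℝ → ℝ} {h' : ℝ} (i k l : Fin N) (hh : HasDerivAt h h' (x k - x l)) :
    pd i (fun y => h (y k - y l)) x =
      h' * ((Pi.single i 1 : Fin N → ℝ) k - (Pi.single i 1 : Fin N → ℝ) l) := by
  have hsub : HasFDerivAt (fun y : Fin N → ℝ => y k - y l) _ x :=
    (hasFDerivAt_apply (𝕜 := ℝ) k x).sub (hasFDerivAt_apply l x)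
  exact congrArg (· (Pi.single i 1)) (hh.comp_hasFDerivAt x hsub).fderiv

lemma contDiffAt_pd (i : Fin N) (hF : ContDiffAt ℝ 2 F x) : ContDiffAt ℝ 1 (pd i F) x :=
  (hF.fderiv_right (m := 1) (by norm_num)).clm_apply contDiffAt_const

lemma pd_pd_smul (i : Fin N) (hf : ContDiffAt ℝ 2 f x) (hF : ContDiffAt ℝ 2 F x) :
    pd i (pd i fun y => f y • F y) x =
      f x • pd i (pd i F) x + (2 * pd i f x) • pd i F x + pd i (pd i f) x • F x := by
  have leibniz : pd i (fun y => f y • F y) =ᶠ[nhds x] fun y => f y • pd i F y + pd i f y • F y := by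
    filter_upwards [hf.eventually (by simp), hF.eventually (by simp)] with y hfy hFy
    exact pd_smul i (hfy.differentiableAt (by simp)) (hFy.differentiableAt (by simp))
  have hf₀ := hf.differentiableAt (by simp)
  have hF₀ := hF.differentiableAt (by simp)
  have hf₁ := (contDiffAt_pd i hf).differentiableAt (by simp)
  have hF₁ := (contDiffAt_pd i hF).differentiableAt (by simp)
  rw [pd_congr_of_eventuallyEq i leibniz, pd_add i (hf₀.fun_smul hF₁) (hf₁.fun_smul hF₀),
    pd_smul i hf₀ hF₁, pd_smul i hf₁ hF₀]
  module

lemma pd_sum_smul_const {ι : Type*} {u : Finset ι} {f : ι → (Fin N → ℝ) → ℝ} (v : ι → E)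
    (i : Fin N) (hf : ∀ k ∈ u, DifferentiableAt ℝ (f k) x) :
    pd i (fun y => ∑ k ∈ u, f k y • v k) x = ∑ k ∈ u, pd i (f k) x • v k := by
  rw [pd_sum i fun k hk => (hf k hk).smul_const (v k)]
  refine sum_congr rfl fun k hk => ?_
  simp [pd, fderiv_smul_const (hf k hk)]

end PartialDerivative

section Trigonometry

lemma cot_neg (u : ℝ) : cot (-u) = -cot u := by
  simp only [cot_eq_cos_div_sin, cos_neg, sin_neg, div_neg]

lemma inv_sin_sq_eq {u : ℝ} (hu : sin u ≠ 0) : (sin u ^ 2)⁻¹ = 1 + cot u ^ 2 := by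
  rw [cot_eq_cos_div_sin]
  field_simp
  rw [sin_sq_add_cos_sq]

lemma hasDerivAt_cot {u : ℝ} (hu : sin u ≠ 0) : HasDerivAt cot (-(sin u ^ 2)⁻¹) u := by
  rw [show cot = fun v => cos v / sin v from funext cot_eq_cos_div_sin]
  refine ((hasDerivAt_cos u).fun_div (hasDerivAt_sin u) hu).congr_deriv ?_
  field_simp
  linear_combination -sin_sq_add_cos_sq u

/-- The general real oscillation of frequency `2`, treating the cosine of `Ψ₃` and the sine of
`Ψ₄` together. -/
def sinusoid (A B u : ℝ) : ℝ := A * cos (2 * u) + B * sin (2 * u)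

lemma hasDerivAt_sinusoid (A B u : ℝ) :
    HasDerivAt (sinusoid A B) (2 * sinusoid B (-A) u) u := by
  have h2 : HasDerivAt (fun v : ℝ => 2 * v) 2 u := by simpa using (hasDerivAt_id u).const_mul 2
  refine ((h2.cos.const_mul A).add (h2.sin.const_mul B)).congr_deriv ?_
  rw [sinusoid]
  ring

lemma sinusoid_neg_neg (A B u : ℝ) : sinusoid (-A) (-B) u = -sinusoid A B u := by
  simp only [sinusoid]
  ring

lemma sinusoid_add (A B u v : ℝ) : sinusoid A B (u + v) =
    cos (2 * v) * sinusoid A B u + sin (2 * v) * sinusoid B (-A) u := by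
  simp only [sinusoid, mul_add, cos_add, sin_add]
  ring

lemma cot_mul_sinusoid_sub (A B : ℝ) {u v : ℝ} (h : sin (u - v) ≠ 0) :
    cot (u - v) * (sinusoid B (-A) u - sinusoid B (-A) v) =
      -(sinusoid A B u + sinusoid A B v) := by
  obtain ⟨w, rfl⟩ : ∃ w, u = v + w := ⟨u - v, by ring⟩
  rw [add_sub_cancel_left] at h ⊢
  rw [sinusoid_add, sinusoid_add, sinusoid_neg_neg, cos_two_mul, sin_two_mul, cot_eq_cos_div_sin]
  field_simp
  linear_combination (2 * cos w * sinusoid B (-A) v) * sin_sq_add_cos_sq w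

lemma inv_sin_sq_mul_sinusoid_sub (A B : ℝ) {u v : ℝ} (h : sin (v - u) ≠ 0) :
    (sin (v - u) ^ 2)⁻¹ * (sinusoid A B u - sinusoid A B v) =
      2 * sinusoid A B u - 2 * cot (v - u) * sinusoid B (-A) u := by
  obtain ⟨w, rfl⟩ : ∃ w, v = u + w := ⟨v - u, by ring⟩
  rw [add_sub_cancel_left] at h ⊢
  rw [sinusoid_add, cos_two_mul, sin_two_mul, cot_eq_cos_div_sin]
  field_simp
  linear_combination (-2 * sinusoid A B u) * sin_sq_add_cos_sq w

end Trigonometry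

section RegularSet

variable {N : ℕ} [NeZero N] {x : Fin N → ℝ}

/-- The configurations at which every factor of the gauge factor `mu2` is positive. It contains
`C2 N`, but is open by construction and imposes no order on the particles. -/
def regularSet (N : ℕ) [NeZero N] : Set (Fin N → ℝ) :=
  {x | ∀ i, 0 < sin |x i - x (i + 1)|}

lemma isOpen_regularSet : IsOpen (regularSet N) := by
  simp only [regularSet, Set.ofPred_forall]
  exact isOpen_iInter_of_finite fun i => isOpen_lt continuous_const (by fun_prop)

lemma C2_subset_regularSet (hN : 2 ≤ N) : C2 N ⊆ regularSet N := by
  obtain ⟨n, rfl⟩ : ∃ n, N = n + 2 := ⟨N - 2, by omega⟩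
  rintro x ⟨hmono, hwidth⟩ i
  have hlast : (-1 : Fin (n + 2)) = Fin.last (n + 1) := by simp [neg_eq_iff_eq_neg]
  have lower (k) : x 0 ≤ x k := hmono.monotone (Fin.zero_le k)
  have upper (k) : x k ≤ x (-1) := hmono.monotone (hlast ▸ Fin.le_last k)
  have hne : x i ≠ x (i + 1) := hmono.injective.ne (by simp)
  refine sin_pos_of_pos_of_lt_pi (abs_pos.mpr (sub_ne_zero.mpr hne)) (abs_lt.mpr ⟨?_, ?_⟩)
  · linarith [lower i, upper (i + 1)]
  · linarith [upper i, lower (i + 1)]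

lemma sin_sub_add_one_ne_zero (hx : x ∈ regularSet N) (i : Fin N) : sin (x i - x (i + 1)) ≠ 0 := by
  intro h
  have hpos := hx i
  rcases abs_choice (x i - x (i + 1)) with habs | habs <;>
    simp only [habs, sin_neg, h, neg_zero, lt_self_iff_false] at hpos

lemma sin_sub_sub_one_ne_zero (hx : x ∈ regularSet N) (i : Fin N) :
    sin (x i - x (i - 1)) ≠ 0 := by
  have h := sin_sub_add_one_ne_zero hx (i - 1)
  rwa [sub_add_cancel, ← neg_sub, sin_neg, neg_ne_zero] at h

lemma add_one_ne_of_mem_regularSet (hx : x ∈ regularSet N) (i : Fin N) : i + 1 ≠ i := by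
  intro h
  simpa [h] using hx i

end RegularSet

section Drift

variable {N : ℕ} [NeZero N] {x : Fin N → ℝ}

/-- The drift `cot (x_i - x_{i-1}) + cot (x_i - x_{i+1})`, which is `∂_i log μ / a` for the gauge
factor `μ`. -/
def drift (x : Fin N → ℝ) (i : Fin N) : ℝ := cot (x i - x (i - 1)) + cot (x i - x (i + 1))

lemma sum_drift_mul (x t : Fin N → ℝ) :
    ∑ i, drift x i * t i = ∑ i, cot (x i - x (i + 1)) * (t i - t (i + 1)) := by
  have shift : ∑ i, cot (x i - x (i - 1)) * t i = ∑ i, cot (x (i + 1) - x i) * t (i + 1) := by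
    rw [← Equiv.sum_comp (Equiv.addRight (1 : Fin N))]
    simp
  simp only [drift, add_mul, sum_add_distrib]
  rw [shift, ← sum_add_distrib]
  refine sum_congr rfl fun i _ => ?_
  rw [← neg_sub (x i), cot_neg]
  ring

lemma differentiableAt_drift (hx : x ∈ regularSet N) (i : Fin N) :
    DifferentiableAt ℝ (fun y => drift y i) x :=
  (differentiableAt_comp_coord_sub i (i - 1)
      (hasDerivAt_cot (sin_sub_sub_one_ne_zero hx i)).differentiableAt).fun_add
    (differentiableAt_comp_coord_sub i (i + 1)
      (hasDerivAt_cot (sin_sub_add_one_ne_zero hx i)).differentiableAt)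

lemma pd_drift (hx : x ∈ regularSet N) (i : Fin N) :
    pd i (fun y => drift y i) x =
      -(sin (x i - x (i - 1)) ^ 2)⁻¹ - (sin (x i - x (i + 1)) ^ 2)⁻¹ := by
  have hpred := hasDerivAt_cot (sin_sub_sub_one_ne_zero hx i)
  have hsucc := hasDerivAt_cot (sin_sub_add_one_ne_zero hx i)
  have hi := add_one_ne_of_mem_regularSet hx i
  have hi' : i - 1 ≠ i := by simpa using hi
  simp only [drift]
  rw [pd_add i (differentiableAt_comp_coord_sub i (i - 1) hpred.differentiableAt)
    (differentiableAt_comp_coord_sub i (i + 1) hsucc.differentiableAt),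
    pd_comp_coord_sub i i (i - 1) hpred, pd_comp_coord_sub i i (i + 1) hsucc]
  simp only [Pi.single_eq_same, Pi.single_eq_of_ne hi, Pi.single_eq_of_ne hi']
  ring

lemma sum_inv_sin_sq_sub_one (x : Fin N → ℝ) :
    ∑ i, (sin (x i - x (i - 1)) ^ 2)⁻¹ = ∑ i, (sin (x i - x (i + 1)) ^ 2)⁻¹ := by
  rw [← Equiv.sum_comp (Equiv.addRight (1 : Fin N))]
  refine sum_congr rfl fun i _ => ?_
  rw [Equiv.coe_addRight, add_sub_cancel_right, ← neg_sub, sin_neg, neg_sq]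

end Drift

section GaugeFactor

variable {N : ℕ} [NeZero N] {x : Fin N → ℝ}

/-- `log μ / a` for the gauge factor `μ`. No absolute values are needed inside the sine,
since `Real.log` is even. -/
def logGauge (x : Fin N → ℝ) : ℝ := ∑ k, log (sin (x k - x (k + 1)))

lemma mu2_eq_exp (a : ℝ) (hx : x ∈ regularSet N) : mu2 a x = exp (a * logGauge x) := by
  rw [mu2, logGauge, mul_sum, exp_sum]
  refine prod_congr rfl fun k _ => ?_
  rw [rpow_def_of_pos (hx k), mul_comm]
  rcases abs_choice (x k - x (k + 1)) with habs | habs <;>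
    simp only [habs, sin_neg, log_neg_eq_log]

lemma contDiffAt_log_sin_sub {n : WithTop ℕ∞} (hx : x ∈ regularSet N) (k : Fin N) :
    ContDiffAt ℝ n (fun y : Fin N → ℝ => log (sin (y k - y (k + 1)))) x :=
  ContDiffAt.log (by fun_prop) (sin_sub_add_one_ne_zero hx k)

lemma contDiffAt_logGauge {n : WithTop ℕ∞} (hx : x ∈ regularSet N) : ContDiffAt ℝ n logGauge x :=
  ContDiffAt.sum fun k _ => contDiffAt_log_sin_sub hx k

lemma pd_logGauge (hx : x ∈ regularSet N) (i : Fin N) : pd i logGauge x = drift x i := by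
  have hderiv (k) : HasDerivAt (fun u => log (sin u)) (cot (x k - x (k + 1)))
      (x k - x (k + 1)) := by
    rw [cot_eq_cos_div_sin]
    exact (hasDerivAt_sin _).log (sin_sub_add_one_ne_zero hx k)
  calc pd i logGauge x
      = ∑ k, pd i (fun y => log (sin (y k - y (k + 1)))) x :=
        pd_sum i fun k _ => (contDiffAt_log_sin_sub (n := 1) hx k).differentiableAt (by simp)
    _ = ∑ k, cot (x k - x (k + 1)) *
          ((Pi.single i 1 : Fin N → ℝ) k - (Pi.single i 1 : Fin N → ℝ) (k + 1)) :=
        sum_congr rfl fun k _ => pd_comp_coord_sub i k (k + 1) (hderiv k)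
    _ = ∑ k, drift x k * (Pi.single i 1 : Fin N → ℝ) k := (sum_drift_mul x _).symm
    _ = drift x i := by simp [Pi.single_apply]

lemma mu2_eventuallyEq_exp (a : ℝ) (hx : x ∈ regularSet N) :
    mu2 a =ᶠ[nhds x] fun y => exp (a * logGauge y) := by
  filter_upwards [isOpen_regularSet.mem_nhds hx] with y hy using mu2_eq_exp a hy

lemma contDiffAt_mu2 {n : WithTop ℕ∞} (a : ℝ) (hx : x ∈ regularSet N) :
    ContDiffAt ℝ n (mu2 a) x :=
  (contDiffAt_const.mul (contDiffAt_logGauge hx)).exp.congr_of_eventuallyEq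
    (mu2_eventuallyEq_exp a hx)

lemma pd_mu2 (a : ℝ) (hx : x ∈ regularSet N) (i : Fin N) :
    pd i (mu2 a) x = (a * drift x i) * mu2 a x := by
  have hlog := (contDiffAt_logGauge (n := 1) hx).differentiableAt (by simp)
  have hpd := pd_logGauge hx i
  rw [pd] at hpd
  rw [pd_congr_of_eventuallyEq i (mu2_eventuallyEq_exp a hx), mu2_eq_exp a hx, pd,
    fderiv_exp (hlog.const_mul a), fderiv_const_mul hlog]
  simp only [smul_apply, smul_eq_mul, hpd]
  ring

lemma pd_pd_mu2 (a : ℝ) (hx : x ∈ regularSet N) (i : Fin N) :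
    pd i (pd i (mu2 a)) x =
      (a ^ 2 * drift x i ^ 2 + a * pd i (fun y => drift y i) x) * mu2 a x := by
  have hpd : pd i (mu2 a) =ᶠ[nhds x] fun y => drift y i • a • mu2 a y := by
    filter_upwards [isOpen_regularSet.mem_nhds hx] with y hy
    rw [pd_mu2 a hy, smul_eq_mul, smul_eq_mul]
    ring
  have hmu := (contDiffAt_mu2 (n := 1) a hx).differentiableAt (by simp)
  rw [pd_congr_of_eventuallyEq i hpd,
    pd_smul i (differentiableAt_drift hx i) (hmu.fun_const_smul a),
    pd_smul i (differentiableAt_const a) hmu, pd_mu2 a hx]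
  simp only [pd, fderiv_const_apply, zero_apply, smul_eq_mul]
  ring

lemma sum_pd_pd_mu2 (a : ℝ) (hx : x ∈ regularSet N) :
    ∑ i, pd i (pd i (mu2 a)) x =
      (2 * a ^ 2 * ∑ i, cot (x i - x (i - 1)) * cot (x i - x (i + 1)) +
        2 * a * (a - 1) * ∑ i, (sin (x i - x (i + 1)) ^ 2)⁻¹ - 2 * N * a ^ 2) * mu2 a x := by
  have term (i) : pd i (pd i (mu2 a)) x =
      (2 * a ^ 2 * (cot (x i - x (i - 1)) * cot (x i - x (i + 1))) +
        a * (a - 1) * ((sin (x i - x (i - 1)) ^ 2)⁻¹ + (sin (x i - x (i + 1)) ^ 2)⁻¹) -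
        2 * a ^ 2) * mu2 a x := by
    rw [pd_pd_mu2 a hx, pd_drift hx, inv_sin_sq_eq (sin_sub_sub_one_ne_zero hx i),
      inv_sin_sq_eq (sin_sub_add_one_ne_zero hx i), drift]
    ring
  simp only [term, ← sum_mul, sum_sub_distrib, sum_add_distrib, ← mul_sum,
    sum_inv_sin_sq_sub_one, sum_const, card_univ, Fintype.card_fin, nsmul_eq_mul]
  ring

end GaugeFactor

section GaugeTransformation

variable {N d : ℕ}

lemma Sop_smul (i k : Fin N) (c : ℝ) (v : Spin N d) : Sop i k (c • v) = c • Sop i k v := rfl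

theorem H2_mu2_smul [NeZero N] (a : ℝ) {φ : (Fin N → ℝ) → Spin N d} {x : Fin N → ℝ}
    (hx : x ∈ regularSet N) (hφ : ContDiffAt ℝ 2 φ x) :
    H2 a (fun y => mu2 a y • φ y) x = mu2 a x • ((2 * N * a ^ 2) • φ x
      - ∑ i, pd i (pd i φ) x - (2 * a) • ∑ i, drift x i • pd i φ x
      + (2 * a) • ∑ i, (sin (x i - x (i + 1)) ^ 2)⁻¹ • (φ x - Sop i (i + 1) (φ x))) := by
  have kinetic : ∑ i, pd i (pd i fun y => mu2 a y • φ y) x =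
      mu2 a x • ∑ i, pd i (pd i φ) x + (2 * a * mu2 a x) • ∑ i, drift x i • pd i φ x +
        (∑ i, pd i (pd i (mu2 a)) x) • φ x := by
    simp only [smul_sum, sum_smul, ← sum_add_distrib]
    refine sum_congr rfl fun i _ => ?_
    rw [pd_pd_smul i (contDiffAt_mu2 a hx) hφ, pd_mu2 a hx]
    module
  have exchange : ∑ i, (sin (x i - x (i + 1)) ^ 2)⁻¹ •
        (a • mu2 a x • φ x - Sop i (i + 1) (mu2 a x • φ x)) =
      mu2 a x • ∑ i, (sin (x i - x (i + 1)) ^ 2)⁻¹ • (φ x - Sop i (i + 1) (φ x)) +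
        ((a - 1) * (∑ i, (sin (x i - x (i + 1)) ^ 2)⁻¹) * mu2 a x) • φ x := by
    simp only [smul_sum, mul_sum, sum_mul, sum_smul, ← sum_add_distrib, Sop_smul]
    exact sum_congr rfl fun i _ => by module
  simp only [H2, ← cot_eq_cos_div_sin, kinetic, exchange, sum_pd_pd_mu2 a hx]
  module

end GaugeTransformation

section PairAmplitude

variable {N : ℕ} {x : Fin N → ℝ}

/-- The coefficient of the spin vector with index `j` in `Ψ / μ`. The diagonal term `k = j`, which
is the constant `A`, is kept so that the sum over `k` telescopes around the cycle. -/
def pairAmplitude (A B : ℝ) (j : Fin N) (x : Fin N → ℝ) : ℝ := ∑ k, sinusoid A B (x k - x j)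

lemma differentiableAt_sinusoid_coord_sub (A B : ℝ) (k j : Fin N) :
    DifferentiableAt ℝ (fun y : Fin N → ℝ => sinusoid A B (y k - y j)) x :=
  differentiableAt_comp_coord_sub k j (hasDerivAt_sinusoid A B _).differentiableAt

lemma contDiff_pairAmplitude {n : WithTop ℕ∞} (A B : ℝ) (j : Fin N) :
    ContDiff ℝ n (pairAmplitude A B j) := by
  unfold pairAmplitude sinusoid
  fun_prop

lemma pd_pairAmplitude (A B : ℝ) (i j : Fin N) (x : Fin N → ℝ) :
    pd i (pairAmplitude A B j) x = ∑ k, 2 * sinusoid B (-A) (x k - x j) *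
      ((Pi.single i 1 : Fin N → ℝ) k - (Pi.single i 1 : Fin N → ℝ) j) :=
  (pd_sum i fun k _ => differentiableAt_sinusoid_coord_sub A B k j).trans <|
    sum_congr rfl fun k _ => pd_comp_coord_sub i k j (hasDerivAt_sinusoid A B _)

lemma pd_pd_pairAmplitude (A B : ℝ) (i j : Fin N) (x : Fin N → ℝ) :
    pd i (pd i (pairAmplitude A B j)) x = ∑ k, -4 * sinusoid A B (x k - x j) *
      ((Pi.single i 1 : Fin N → ℝ) k - (Pi.single i 1 : Fin N → ℝ) j) ^ 2 := by
  have hderiv (k) := ((hasDerivAt_sinusoid B (-A) (x k - x j)).const_mul 2).mul_const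
    ((Pi.single i 1 : Fin N → ℝ) k - (Pi.single i 1 : Fin N → ℝ) j)
  rw [funext (pd_pairAmplitude A B i j),
    pd_sum i fun k _ => differentiableAt_comp_coord_sub k j (hderiv k).differentiableAt]
  refine sum_congr rfl fun k _ => ?_
  rw [pd_comp_coord_sub i k j (hderiv k), sinusoid_neg_neg]
  ring

lemma sum_pi_single_sub_sq (k j : Fin N) :
    ∑ i, ((Pi.single i 1 : Fin N → ℝ) k - (Pi.single i 1 : Fin N → ℝ) j) ^ 2 =
      if k = j then 0 else 2 := by
  split_ifs with hkj
  · simp [hkj]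
  · have term (i) : ((Pi.single i 1 : Fin N → ℝ) k - (Pi.single i 1 : Fin N → ℝ) j) ^ 2 =
        (if k = i then 1 else 0) + (if j = i then 1 else 0) := by
      grind
    simp only [term, sum_add_distrib, sum_ite_eq, mem_univ, if_true]
    norm_num

lemma sum_pd_pd_pairAmplitude (A B : ℝ) (j : Fin N) (x : Fin N → ℝ) :
    ∑ i, pd i (pd i (pairAmplitude A B j)) x = 8 * A - 8 * pairAmplitude A B j x := by
  simp only [pd_pd_pairAmplitude]
  rw [sum_comm]
  have term (k) : -4 * sinusoid A B (x k - x j) * (if k = j then 0 else 2) =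
      (if k = j then 8 * A else 0) - 8 * sinusoid A B (x k - x j) := by
    split_ifs with hkj
    · simp [hkj, sinusoid]
    · ring
  simp only [← mul_sum, sum_pi_single_sub_sq, term, sum_sub_distrib, sum_ite_eq', mem_univ,
    if_true, pairAmplitude]

lemma inv_sin_sq_mul_pairAmplitude_sub (A B : ℝ) {j l : Fin N} (h : sin (x j - x l) ≠ 0) :
    (sin (x j - x l) ^ 2)⁻¹ * (pairAmplitude A B j x - pairAmplitude A B l x) =
      2 * pairAmplitude A B j x - 2 * cot (x j - x l) * pairAmplitude B (-A) j x := by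
  simp only [pairAmplitude, ← sum_sub_distrib, mul_sum]
  refine sum_congr rfl fun k _ => ?_
  rw [← sub_sub_sub_cancel_left (x l) (x j) (x k)] at h ⊢
  exact inv_sin_sq_mul_sinusoid_sub A B h

variable [NeZero N]

lemma sum_drift_mul_sinusoid (A B c : ℝ) (hx : x ∈ regularSet N) :
    ∑ k, drift x k * sinusoid B (-A) (x k - c) = -2 * ∑ k, sinusoid A B (x k - c) := by
  have shift : ∑ k, sinusoid A B (x (k + 1) - c) = ∑ k, sinusoid A B (x k - c) :=
    Equiv.sum_comp (Equiv.addRight (1 : Fin N)) fun k => sinusoid A B (x k - c)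
  have telescope (k) : cot (x k - x (k + 1)) *
        (sinusoid B (-A) (x k - c) - sinusoid B (-A) (x (k + 1) - c)) =
      -(sinusoid A B (x k - c) + sinusoid A B (x (k + 1) - c)) := by
    have h := sin_sub_add_one_ne_zero hx k
    rw [← sub_sub_sub_cancel_right (x k) (x (k + 1)) c] at h ⊢
    exact cot_mul_sinusoid_sub A B h
  rw [sum_drift_mul x fun k => sinusoid B (-A) (x k - c)]
  simp only [telescope, sum_neg_distrib, sum_add_distrib, shift]
  ring

lemma sum_drift_mul_pd_pairAmplitude (A B : ℝ) (j : Fin N) (hx : x ∈ regularSet N) :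
    ∑ i, drift x i * pd i (pairAmplitude A B j) x =
      -4 * pairAmplitude A B j x - 2 * drift x j * pairAmplitude B (-A) j x := by
  have contract (k) :
      ∑ i, drift x i * ((Pi.single i 1 : Fin N → ℝ) k - (Pi.single i 1 : Fin N → ℝ) j) =
        drift x k - drift x j := by
    simp [Pi.single_apply, mul_sub]
  calc ∑ i, drift x i * pd i (pairAmplitude A B j) x
      = ∑ k, 2 * sinusoid B (-A) (x k - x j) * (drift x k - drift x j) := by
        simp only [pd_pairAmplitude, ← contract, mul_sum]
        rw [sum_comm]
        exact sum_congr rfl fun k _ => sum_congr rfl fun i _ => by ring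
    _ = 2 * ∑ k, drift x k * sinusoid B (-A) (x k - x j) -
          2 * drift x j * pairAmplitude B (-A) j x := by
        rw [pairAmplitude, mul_sum, mul_sum, ← sum_sub_distrib]
        exact sum_congr rfl fun k _ => by ring
    _ = -4 * pairAmplitude A B j x - 2 * drift x j * pairAmplitude B (-A) j x := by
        rw [sum_drift_mul_sinusoid A B (x j) hx, ← pairAmplitude]
        ring

lemma sum_mul_sub_swap_add_one {R : Type*} [Ring R] (q w : Fin N → R) (j : Fin N) :
    ∑ i, q i * (w j - w (Equiv.swap i (i + 1) j)) =
      q j * (w j - w (j + 1)) + q (j - 1) * (w j - w (j - 1)) := by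
  have term (i) : q i * (w j - w (Equiv.swap i (i + 1) j)) =
      (if i = j then q i * (w j - w (i + 1)) else 0) +
        (if i = j - 1 then q i * (w j - w i) else 0) := by
    rcases eq_or_ne j i with rfl | hi
    · simp +contextual [eq_sub_iff_add_eq]
    rcases eq_or_ne j (i + 1) with rfl | hi'
    · simp [hi.symm]
    · simp [Equiv.swap_apply_of_ne_of_ne hi hi', hi.symm, eq_sub_iff_add_eq, hi'.symm]
  simp only [term, sum_add_distrib, sum_ite_eq', mem_univ, if_true]

lemma sum_exchange_pairAmplitude (A B : ℝ) (j : Fin N) (hx : x ∈ regularSet N) :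
    ∑ i, (sin (x i - x (i + 1)) ^ 2)⁻¹ *
        (pairAmplitude A B j x - pairAmplitude A B (Equiv.swap i (i + 1) j) x) =
      4 * pairAmplitude A B j x - 2 * drift x j * pairAmplitude B (-A) j x := by
  have hpred : sin (x (j - 1) - x j) ^ 2 = sin (x j - x (j - 1)) ^ 2 := by
    rw [← neg_sub, sin_neg, neg_sq]
  rw [sum_mul_sub_swap_add_one (fun i => (sin (x i - x (i + 1)) ^ 2)⁻¹)
      (fun k => pairAmplitude A B k x) j, sub_add_cancel, hpred,
    inv_sin_sq_mul_pairAmplitude_sub A B (sin_sub_add_one_ne_zero hx j),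
    inv_sin_sq_mul_pairAmplitude_sub A B (sin_sub_sub_one_ne_zero hx j), drift]
  ring

end PairAmplitude

section PairState

variable {N d : ℕ}

lemma Sop_sComp [NeZero N] (s : Spin N d) (i k j : Fin N) :
    Sop i k (sComp s j) = sComp s (Equiv.swap i k j) := by
  funext c
  simp only [Sop, sComp, Pi.smul_apply, Finset.sum_apply, sum_filter]
  congr 1
  refine Fintype.sum_equiv (Equiv.mulLeft (Equiv.swap i k)) _ _ fun σ => ?_
  by_cases hσ : σ 0 = j <;> simp [hσ, spinPerm, Function.comp_assoc]

lemma Sop_sum_smul {v : Fin N → Spin N d} {i k : Fin N}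
    (hv : ∀ j, Sop i k (v j) = v (Equiv.swap i k j)) (w : Fin N → ℝ) :
    Sop i k (∑ j, w j • v j) = ∑ j, w (Equiv.swap i k j) • v j := by
  calc Sop i k (∑ j, w j • v j)
      = ∑ j, w j • Sop i k (v j) := by
        funext c
        simp [Sop]
    _ = ∑ j, w (Equiv.swap i k j) • v j := by
        rw [← Equiv.sum_comp (Equiv.swap i k)]
        simp [hv]

/-- The common form of `Ψ₃ / μ` (with `A = 1`, `B = 0`) and `Ψ₄ / μ` (with `A = 0`, `B = 1`), for
an arbitrary family `v` in place of the spin vectors `|s_j⟩`. -/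
def pairState (A B κ : ℝ) (v : Fin N → Spin N d) (x : Fin N → ℝ) : Spin N d :=
  κ • ∑ j, v j + ∑ i, ∑ j ∈ univ.erase i, sinusoid A B (x i - x j) • v j

lemma pairState_eq_sum (A B κ : ℝ) (v : Fin N → Spin N d) (x : Fin N → ℝ) :
    pairState A B κ v x = ∑ j, (pairAmplitude A B j x - (A - κ)) • v j := by
  have offDiag (i) : ∑ j ∈ univ.erase i, sinusoid A B (x i - x j) • v j =
      ∑ j, sinusoid A B (x i - x j) • v j - A • v i := by
    rw [← sum_erase_add _ _ (mem_univ i)]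
    simp [sinusoid]
  simp only [pairState, offDiag, sum_sub_distrib]
  rw [sum_comm]
  simp only [← sum_smul, smul_sum, ← sum_sub_distrib, ← sum_add_distrib]
  refine sum_congr rfl fun j _ => ?_
  rw [← pairAmplitude]
  module

lemma contDiff_pairState {n : WithTop ℕ∞} (A B κ : ℝ) (v : Fin N → Spin N d) :
    ContDiff ℝ n (pairState A B κ v) := by
  rw [funext (pairState_eq_sum A B κ v)]
  exact ContDiff.sum fun j _ =>
    ((contDiff_pairAmplitude A B j).sub contDiff_const).smul contDiff_const

lemma pd_pairState (A B κ : ℝ) (v : Fin N → Spin N d) (i : Fin N) (x : Fin N → ℝ) :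
    pd i (pairState A B κ v) x = ∑ j, pd i (pairAmplitude A B j) x • v j := by
  have hdiff (j) := (contDiff_pairAmplitude (n := 1) A B j).differentiable (by simp) x
  rw [funext (pairState_eq_sum A B κ v),
    pd_sum_smul_const v i fun j _ => (hdiff j).sub_const (A - κ)]
  simp only [pd, fderiv_sub_const]

lemma pd_pd_pairState (A B κ : ℝ) (v : Fin N → Spin N d) (i : Fin N) (x : Fin N → ℝ) :
    pd i (pd i (pairState A B κ v)) x = ∑ j, pd i (pd i (pairAmplitude A B j)) x • v j := by
  rw [funext (pd_pairState A B κ v i)]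
  exact pd_sum_smul_const v i fun j _ =>
    (contDiffAt_pd i (contDiff_pairAmplitude A B j).contDiffAt).differentiableAt (by simp)

theorem H2_mu2_smul_pairState [NeZero N] {a A B κ : ℝ} {v : Fin N → Spin N d} {x : Fin N → ℝ}
    (hκ : (2 * a + 1) * κ = 2 * a * A)
    (hv : ∀ i j, Sop i (i + 1) (v j) = v (Equiv.swap i (i + 1) j)) (hx : x ∈ regularSet N) :
    H2 a (fun y => mu2 a y • pairState A B κ v y) x =
      (2 * N * a ^ 2 + 8 * (2 * a + 1)) • (mu2 a x • pairState A B κ v x) := by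
  have laplacian : ∑ i, pd i (pd i (pairState A B κ v)) x =
      ∑ j, (8 * A - 8 * pairAmplitude A B j x) • v j := by
    simp only [pd_pd_pairState, ← sum_pd_pd_pairAmplitude, sum_smul]
    exact sum_comm
  have advection : ∑ i, drift x i • pd i (pairState A B κ v) x =
      ∑ j, (-4 * pairAmplitude A B j x - 2 * drift x j * pairAmplitude B (-A) j x) • v j := by
    simp only [pd_pairState, ← sum_drift_mul_pd_pairAmplitude A B _ hx, sum_smul, smul_sum,
      smul_smul]
    exact sum_comm
  have exchange : ∑ i, (sin (x i - x (i + 1)) ^ 2)⁻¹ •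
        (pairState A B κ v x - Sop i (i + 1) (pairState A B κ v x)) =
      ∑ j, (4 * pairAmplitude A B j x - 2 * drift x j * pairAmplitude B (-A) j x) • v j := by
    simp only [pairState_eq_sum, Sop_sum_smul (hv _), ← sum_sub_distrib, ← sub_smul,
      sub_sub_sub_cancel_right, ← sum_exchange_pairAmplitude A B _ hx, sum_smul, smul_sum,
      smul_smul]
    exact sum_comm
  rw [H2_mu2_smul a hx (contDiff_pairState A B κ v).contDiffAt, laplacian, advection, exchange,
    pairState_eq_sum]
  simp only [smul_sum, ← sum_sub_distrib, ← sum_add_distrib]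
  refine sum_congr rfl fun j _ => ?_
  match_scalars
  linear_combination -8 * mu2 a x * hκ

end PairState

theorem stmt_16_general (N d : ℕ) [NeZero N] (a : ℝ) (s : Spin N d) :
    (2 * a + 1 ≠ 0 → ∀ x ∈ regularSet N,
      H2 a (fun y => mu2 a y •
          ((2 * a / (2 * a + 1)) • Lam s +
            ∑ i : Fin N, ∑ j ∈ Finset.univ.erase i,
              Real.cos (2 * (y i - y j)) • sComp s j)) x =
        (2 * N * a ^ 2 + 8 * (2 * a + 1)) •
          (mu2 a x •
            ((2 * a / (2 * a + 1)) • Lam s +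
              ∑ i : Fin N, ∑ j ∈ Finset.univ.erase i,
                Real.cos (2 * (x i - x j)) • sComp s j))) ∧
    (∀ x ∈ regularSet N,
      H2 a (fun y => mu2 a y •
          ∑ i : Fin N, ∑ j ∈ Finset.univ.erase i,
            Real.sin (2 * (y i - y j)) • sComp s j) x =
        (2 * N * a ^ 2 + 8 * (2 * a + 1)) •
          (mu2 a x •
            ∑ i : Fin N, ∑ j ∈ Finset.univ.erase i,
              Real.sin (2 * (x i - x j)) • sComp s j)) := by
  have hv (i j : Fin N) := Sop_sComp s i (i + 1) j
  constructor
  · intro ha x hx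
    simpa [pairState, sinusoid, Lam] using
      H2_mu2_smul_pairState (A := 1) (B := 0) (by field_simp) hv hx
  · intro x hx
    simpa [pairState, sinusoid] using
      H2_mu2_smul_pairState (a := a) (A := 0) (B := 1) (κ := 0) (by simp) hv hx

theorem stmt_16 (N d : ℕ) [NeZero N] (hN : 3 ≤ N) (hd : 1 ≤ d)
    (a : ℝ) (ha : 1 / 2 < a) (s : Spin N d) :
    (∀ x ∈ C2 N,
      H2 a (fun y => mu2 a y •
          ((2 * a / (2 * a + 1)) • Lam s +
            ∑ i : Fin N, ∑ j ∈ Finset.univ.erase i,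
              Real.cos (2 * (y i - y j)) • sComp s j)) x =
        (2 * N * a ^ 2 + 8 * (2 * a + 1)) •
          (mu2 a x •
            ((2 * a / (2 * a + 1)) • Lam s +
              ∑ i : Fin N, ∑ j ∈ Finset.univ.erase i,
                Real.cos (2 * (x i - x j)) • sComp s j))) ∧
    (∀ x ∈ C2 N,
      H2 a (fun y => mu2 a y •
          ∑ i : Fin N, ∑ j ∈ Finset.univ.erase i,
            Real.sin (2 * (y i - y j)) • sComp s j) x =
        (2 * N * a ^ 2 + 8 * (2 * a + 1)) •
          (mu2 a x •
            ∑ i : Fin N, ∑ j ∈ Finset.univ.erase i,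
              Real.sin (2 * (x i - x j)) • sComp s j)) := by
  obtain ⟨cosine, sine⟩ := stmt_16_general N d a s
  have regular := C2_subset_regularSet (N := N) (by omega)
  exact ⟨fun x hx => cosine (by linarith) x (regular hx), fun x hx => sine x (regular hx)⟩
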